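/- Theorem 1 (pointwise certification): Let f^{w_1},…,f^{w_N} be K-layer feedforward networks of a common architecture with C = n_K output classes and monotone nondecreasing activation h, let x* ∈ ℝ^{n_0}, let y* be a class and ε ≥ 0. If Ê^{N,ε}_{y*,LB} > Ê^{N,ε}_{c,UB} for every class c ≠ y* (i.e., the class y* is the unique maximizer of the IBP worst-case predictor at x*), then for every x̄ with ‖x* − x̄‖_∞ ≤ ε we have Ê^N(x̄)_{y*} > Ê^N(x̄)_c for every c ≠ y*; i.e., the empirical posterior predictor classifies every point of the ℓ∞ ε-ball around x* as y*, so x* has no adversarial examples within radius ε. -/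

import Mathlib

/-- Activations of a feedforward network: `netPhi … x 0 = x` (the input `φ_(0)`) and
`netPhi … x (k+1) = h (W_k (netPhi … x k) + b_k)` (the activation `φ_(k+1)`).
For a `K`-layer network only the values with `k ≤ K - 1` are used. -/
noncomputable def netPhi (n : ℕ → ℕ)
    (W : ∀ k : ℕ, Matrix (Fin (n (k + 1))) (Fin (n k)) ℝ)
    (b : ∀ k : ℕ, Fin (n (k + 1)) → ℝ) (h : ℝ → ℝ)
    (x : Fin (n 0) → ℝ) : (k : ℕ) → Fin (n k) → ℝ
  | 0 => x
  | (k + 1) => fun i => h (((W k).mulVec (netPhi n W b h x k) + b k) i)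

/-- Pre-activations: `netPre … x k = W_k φ_(k) + b_k`, i.e. the pre-activation
`f_(k+1)` of the network.  The output of a `K`-layer network is `f^w(x) = netPre … x (K-1)`. -/
noncomputable def netPre (n : ℕ → ℕ)
    (W : ∀ k : ℕ, Matrix (Fin (n (k + 1))) (Fin (n k)) ℝ)
    (b : ∀ k : ℕ, Fin (n (k + 1)) → ℝ) (h : ℝ → ℝ)
    (x : Fin (n 0) → ℝ) (k : ℕ) : Fin (n (k + 1)) → ℝ :=
  (W k).mulVec (netPhi n W b h x k) + b k

/-- Interval bound propagation on the activations: `ibpPhi … x ε k = (φ_(k)^L, φ_(k)^U)`.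
At `k = 0` the bounds are `x ∓ ε·𝟙`; at `k+1` they are `h (μ_{k+1} ∓ r_{k+1})` with
`μ_{k+1} = W_k (φ_(k)^U + φ_(k)^L)/2 + b_k` and `r_{k+1} = |W_k| (φ_(k)^U − φ_(k)^L)/2`. -/
noncomputable def ibpPhi (n : ℕ → ℕ)
    (W : ∀ k : ℕ, Matrix (Fin (n (k + 1))) (Fin (n k)) ℝ)
    (b : ∀ k : ℕ, Fin (n (k + 1)) → ℝ) (h : ℝ → ℝ)
    (x : Fin (n 0) → ℝ) (ε : ℝ) : (k : ℕ) → (Fin (n k) → ℝ) × (Fin (n k) → ℝ)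
  | 0 => (fun i => x i - ε, fun i => x i + ε)
  | (k + 1) =>
      let L := (ibpPhi n W b h x ε k).1
      let U := (ibpPhi n W b h x ε k).2
      let μ := (W k).mulVec (fun i => (U i + L i) / 2) + b k
      let r := (Matrix.of fun i j => |W k i j|).mulVec (fun i => (U i - L i) / 2)
      (fun i => h (μ i - r i), fun i => h (μ i + r i))

/-- Interval bound propagation on the pre-activations:
`ibpPre … x ε k = (f_(k+1)^L, f_(k+1)^U) = (μ_{k+1} − r_{k+1}, μ_{k+1} + r_{k+1})`.
The IBP output bounds of a `K`-layer network are `(f^{w,L,ε}, f^{w,U,ε}) = ibpPre … x ε (K-1)`. -/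
noncomputable def ibpPre (n : ℕ → ℕ)
    (W : ∀ k : ℕ, Matrix (Fin (n (k + 1))) (Fin (n k)) ℝ)
    (b : ∀ k : ℕ, Fin (n (k + 1)) → ℝ) (h : ℝ → ℝ)
    (x : Fin (n 0) → ℝ) (ε : ℝ) (k : ℕ) : (Fin (n (k + 1)) → ℝ) × (Fin (n (k + 1)) → ℝ) :=
  let L := (ibpPhi n W b h x ε k).1
  let U := (ibpPhi n W b h x ε k).2
  let μ := (W k).mulVec (fun i => (U i + L i) / 2) + b k
  let r := (Matrix.of fun i j => |W k i j|).mulVec (fun i => (U i - L i) / 2)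
  (fun i => μ i - r i, fun i => μ i + r i)

/-- Softmax probability of class `y` for logits `z ∈ ℝ^C`. -/
noncomputable def softmax {C : ℕ} (y : Fin C) (z : Fin C → ℝ) : ℝ :=
  Real.exp (z y) / ∑ j, Real.exp (z j)

/-- The corner vector `f_LB` with `(f_LB) y = L y` and `(f_LB) j = U j` for `j ≠ y`. -/
def cornerLB {C : ℕ} (y : Fin C) (L U : Fin C → ℝ) : Fin C → ℝ :=
  fun j => if j = y then L j else U j

/-- The corner vector `f_UB` with `(f_UB) c' = U c'` and `(f_UB) j = L j` for `j ≠ c'`. -/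
def cornerUB {C : ℕ} (c' : Fin C) (L U : Fin C → ℝ) : Fin C → ℝ :=
  fun j => if j = c' then U j else L j

/-- Empirical posterior predictor of `N` networks `f^{w_1},…,f^{w_N}` of the common
`K`-layer architecture given by `(n, Ws i, bs i, h)`:
`Ê^N(x) c = (1/N) ∑ i σ_c(f^{w_i}(x))`. -/
noncomputable def ensemblePred (n : ℕ → ℕ) (N K : ℕ)
    (Ws : Fin N → ∀ k : ℕ, Matrix (Fin (n (k + 1))) (Fin (n k)) ℝ)
    (bs : Fin N → ∀ k : ℕ, Fin (n (k + 1)) → ℝ) (h : ℝ → ℝ)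
    (x : Fin (n 0) → ℝ) (c : Fin (n (K - 1 + 1))) : ℝ :=
  (1 / (N : ℝ)) * ∑ i : Fin N, softmax c (netPre n (Ws i) (bs i) h x (K - 1))

/-- IBP lower bound on the empirical predictor for class `y` at `x` and radius `ε`:
`Ê^{N,ε}_{y,LB} = (1/N) ∑ i σ_y(f_LB^{w_i,ε}(x))`. -/
noncomputable def ensembleLB (n : ℕ → ℕ) (N K : ℕ)
    (Ws : Fin N → ∀ k : ℕ, Matrix (Fin (n (k + 1))) (Fin (n k)) ℝ)
    (bs : Fin N → ∀ k : ℕ, Fin (n (k + 1)) → ℝ) (h : ℝ → ℝ)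
    (x : Fin (n 0) → ℝ) (y : Fin (n (K - 1 + 1))) (ε : ℝ) : ℝ :=
  (1 / (N : ℝ)) * ∑ i : Fin N,
    softmax y (cornerLB y (ibpPre n (Ws i) (bs i) h x ε (K - 1)).1
      (ibpPre n (Ws i) (bs i) h x ε (K - 1)).2)

/-- IBP upper bound on the empirical predictor for class `c'` at `x` and radius `ε`:
`Ê^{N,ε}_{c',UB} = (1/N) ∑ i σ_{c'}(f_UB^{w_i,ε,c'}(x))`. -/
noncomputable def ensembleUB (n : ℕ → ℕ) (N K : ℕ)
    (Ws : Fin N → ∀ k : ℕ, Matrix (Fin (n (k + 1))) (Fin (n k)) ℝ)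
    (bs : Fin N → ∀ k : ℕ, Fin (n (k + 1)) → ℝ) (h : ℝ → ℝ)
    (x : Fin (n 0) → ℝ) (c' : Fin (n (K - 1 + 1))) (ε : ℝ) : ℝ :=
  (1 / (N : ℝ)) * ∑ i : Fin N,
    softmax c' (cornerUB c' (ibpPre n (Ws i) (bs i) h x ε (K - 1)).1
      (ibpPre n (Ws i) (bs i) h x ε (K - 1)).2)

/-!
Interval bound propagation is sound: an affine map sends the box with centre `c` and radius `r`
into the box with centre `A c + b` and radius `|A| r`, and a monotone activation maps boxes into
boxes, so the bounds at `x*` enclose the logits at every point of the `ε`-ball. The softmax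
probability of a class increases in its own logit and decreases in all others, so over the box of
logits its extreme values are attained at the two corner vectors. Averaging over the ensemble,
`Ê(x̄)_c ≤ Ê_{c,UB} < Ê_{y*,LB} ≤ Ê(x̄)_{y*}`.
-/

section MulVec

open scoped Matrix

variable {m p R : Type*} [Fintype p] [Ring R] [LinearOrder R] [IsOrderedRing R]

theorem abs_mulVec_le_map_abs_mulVec_of_abs_le (A : Matrix m p R) {v r : p → R}
    (hv : |v| ≤ r) : |A *ᵥ v| ≤ A.map abs *ᵥ r := by
  intro i
  calc
    |∑ j, A i j * v j| ≤ ∑ j, |A i j * v j| := Finset.abs_sum_le_sum_abs _ _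
    _ = ∑ j, |A i j| * |v j| := by simp only [abs_mul]
    _ ≤ ∑ j, |A i j| * r j := by gcongr with j; exact hv j

theorem mulVec_add_mem_Icc_of_mem_Icc (A : Matrix m p R) (b : m → R) {v c r : p → R}
    (hv : v ∈ Set.Icc (c - r) (c + r)) :
    A *ᵥ v + b ∈ Set.Icc (A *ᵥ c + b - A.map abs *ᵥ r) (A *ᵥ c + b + A.map abs *ᵥ r) := by
  have hdist : |v - c| ≤ r :=
    abs_le'.2 ⟨sub_le_iff_le_add'.2 hv.2, (neg_sub v c).trans_le (sub_le_comm.1 hv.1)⟩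
  have himage : |A *ᵥ v + b - (A *ᵥ c + b)| ≤ A.map abs *ᵥ r := by
    rw [add_sub_add_right_eq_sub, ← Matrix.mulVec_sub]
    exact abs_mulVec_le_map_abs_mulVec_of_abs_le A hdist
  obtain ⟨hupper, hlower⟩ := abs_le'.1 himage
  exact ⟨sub_le_comm.1 ((neg_sub _ _).symm.trans_le hlower), sub_le_iff_le_add'.1 hupper⟩

end MulVec

section IntervalBoundPropagation

variable {n : ℕ → ℕ} (W : ∀ k : ℕ, Matrix (Fin (n (k + 1))) (Fin (n k)) ℝ)
  (b : ∀ k : ℕ, Fin (n (k + 1)) → ℝ) {h : ℝ → ℝ} {x x' : Fin (n 0) → ℝ} {ε : ℝ}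

theorem netPre_mem_Icc_ibpPre_of_netPhi_mem {k : ℕ}
    (hk : netPhi n W b h x' k ∈ Set.Icc (ibpPhi n W b h x ε k).1 (ibpPhi n W b h x ε k).2) :
    netPre n W b h x' k ∈ Set.Icc (ibpPre n W b h x ε k).1 (ibpPre n W b h x ε k).2 := by
  refine mulVec_add_mem_Icc_of_mem_Icc (W k) (b k) ⟨fun j => ?_, fun j => ?_⟩
  · simp only [Pi.sub_apply]
    linarith [hk.1 j]
  · simp only [Pi.add_apply]
    linarith [hk.2 j]

theorem netPhi_mem_Icc_ibpPhi (hh : Monotone h) (hx : ‖x - x'‖ ≤ ε) (k : ℕ) :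
    netPhi n W b h x' k ∈ Set.Icc (ibpPhi n W b h x ε k).1 (ibpPhi n W b h x ε k).2 := by
  induction k with
  | zero =>
    have hcoord (i : Fin (n 0)) : |x i - x' i| ≤ ε := (norm_le_pi_norm (x - x') i).trans hx
    exact ⟨fun i => sub_le_comm.1 (abs_sub_le_iff.1 (hcoord i)).1,
      fun i => sub_le_iff_le_add'.1 (abs_sub_le_iff.1 (hcoord i)).2⟩
  | succ k ih =>
    have hpre := netPre_mem_Icc_ibpPre_of_netPhi_mem W b ih
    exact ⟨fun i => hh (hpre.1 i), fun i => hh (hpre.2 i)⟩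

theorem netPre_mem_Icc_ibpPre (hh : Monotone h) (hx : ‖x - x'‖ ≤ ε) (k : ℕ) :
    netPre n W b h x' k ∈ Set.Icc (ibpPre n W b h x ε k).1 (ibpPre n W b h x ε k).2 :=
  netPre_mem_Icc_ibpPre_of_netPhi_mem W b (netPhi_mem_Icc_ibpPhi W b hh hx k)

end IntervalBoundPropagation

section Softmax

variable {C : ℕ} {y : Fin C} {z z' L U : Fin C → ℝ}

theorem softmax_le_softmax (hy : z y ≤ z' y) (hne : ∀ j ≠ y, z' j ≤ z j) :
    softmax y z ≤ softmax y z' := by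
  have hpos (v : Fin C → ℝ) : 0 < ∑ j, Real.exp (v j) :=
    Finset.sum_pos (fun j _ => Real.exp_pos (v j)) ⟨y, Finset.mem_univ y⟩
  rw [softmax, softmax, div_le_div_iff₀ (hpos z) (hpos z'), Finset.mul_sum, Finset.mul_sum]
  refine Finset.sum_le_sum fun j _ => ?_
  obtain rfl | hj := eq_or_ne j y
  · exact (mul_comm _ _).le
  · gcongr
    exact hne j hj

theorem softmax_cornerLB_le_softmax (hz : z ∈ Set.Icc L U) :
    softmax y (cornerLB y L U) ≤ softmax y z :=
  softmax_le_softmax ((if_pos rfl).trans_le (hz.1 y))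
    fun j hj => (hz.2 j).trans_eq (if_neg hj).symm

theorem softmax_le_softmax_cornerUB (hz : z ∈ Set.Icc L U) :
    softmax y z ≤ softmax y (cornerUB y L U) :=
  softmax_le_softmax ((hz.2 y).trans_eq (if_pos rfl).symm)
    fun j hj => (if_neg hj).trans_le (hz.1 j)

end Softmax

section Ensemble

variable {n : ℕ → ℕ} {N K : ℕ} (Ws : Fin N → ∀ k : ℕ, Matrix (Fin (n (k + 1))) (Fin (n k)) ℝ)
  (bs : Fin N → ∀ k : ℕ, Fin (n (k + 1)) → ℝ) {h : ℝ → ℝ} {x x' : Fin (n 0) → ℝ} {ε : ℝ}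

theorem ensembleLB_le_ensemblePred (hh : Monotone h) (hx : ‖x - x'‖ ≤ ε)
    (y : Fin (n (K - 1 + 1))) :
    ensembleLB n N K Ws bs h x y ε ≤ ensemblePred n N K Ws bs h x' y := by
  unfold ensembleLB ensemblePred
  gcongr with i
  exact softmax_cornerLB_le_softmax (netPre_mem_Icc_ibpPre (Ws i) (bs i) hh hx (K - 1))

theorem ensemblePred_le_ensembleUB (hh : Monotone h) (hx : ‖x - x'‖ ≤ ε)
    (c : Fin (n (K - 1 + 1))) :
    ensemblePred n N K Ws bs h x' c ≤ ensembleUB n N K Ws bs h x c ε := by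
  unfold ensembleUB ensemblePred
  gcongr with i
  exact softmax_le_softmax_cornerUB (netPre_mem_Icc_ibpPre (Ws i) (bs i) hh hx (K - 1))

end Ensemble

/-- Theorem 1, pointwise certification: if
`Ê^{N,ε}_{y*,LB} > Ê^{N,ε}_{c,UB}` for every class `c ≠ y*`, then for every `x̄` with
`‖x* − x̄‖_∞ ≤ ε` the empirical posterior predictor satisfies
`Ê^N(x̄)_{y*} > Ê^N(x̄)_c` for every `c ≠ y*`; i.e. the whole `ℓ∞` ε-ball around `x*`
is classified as `y*`, so `x*` has no adversarial examples within radius `ε`. -/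
theorem ensemble_pointwise_certification (n : ℕ → ℕ) (N K : ℕ) (hK : 1 ≤ K)
    (Ws : Fin N → ∀ k : ℕ, Matrix (Fin (n (k + 1))) (Fin (n k)) ℝ)
    (bs : Fin N → ∀ k : ℕ, Fin (n (k + 1)) → ℝ) (h : ℝ → ℝ) (hmono : Monotone h)
    (xstar : Fin (n 0) → ℝ) (ystar : Fin (n (K - 1 + 1))) (ε : ℝ) (hε : 0 ≤ ε)
    (hsep : ∀ c : Fin (n (K - 1 + 1)), c ≠ ystar →
      ensembleUB n N K Ws bs h xstar c ε < ensembleLB n N K Ws bs h xstar ystar ε) :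
    ∀ xbar : Fin (n 0) → ℝ, ‖xstar - xbar‖ ≤ ε →
      ∀ c : Fin (n (K - 1 + 1)), c ≠ ystar →
        ensemblePred n N K Ws bs h xbar c < ensemblePred n N K Ws bs h xbar ystar := by
  intro xbar hx c hc
  calc
    ensemblePred n N K Ws bs h xbar c ≤ ensembleUB n N K Ws bs h xstar c ε :=
      ensemblePred_le_ensembleUB Ws bs hmono hx c
    _ < ensembleLB n N K Ws bs h xstar ystar ε := hsep c hc
    _ ≤ ensemblePred n N K Ws bs h xbar ystar := ensembleLB_le_ensemblePred Ws bs hmono hx ystar
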